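/- There is a one-relator inverse monoid Inv⟨A | w = 1⟩ with undecidable word problem: there exist n : ℕ and a word w ∈ FreeMonoid ((Fin n) × Bool) such that, letting σ be the congruence on FreeMonoid ((Fin n) × Bool) generated by the Vagner congruence ν together with the single pair (w, 1), the predicate on pairs of words (u, v) given by 'σ relates u and v' is not ComputablePred. -/

import Mathlib

/-- The formal inverse of a word over `B`: reverse the word and negate the `Bool` component
of each letter. -/
def wInv {B : Type*} (w : FreeMonoid (B × Bool)) : FreeMonoid (B × Bool) :=
  FreeMonoid.ofList (((FreeMonoid.toList w).map fun p => (p.1, !p.2)).reverse)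

/-- The generating relation of the Vagner congruence: `w w⁻¹ w ~ w` and
`w w⁻¹ u u⁻¹ ~ u u⁻¹ w w⁻¹` for all words `u, w`. -/
def vagnerRel (B : Type*) : FreeMonoid (B × Bool) → FreeMonoid (B × Bool) → Prop :=
  fun x y =>
    (∃ w, x = w * wInv w * w ∧ y = w) ∨
    (∃ u w, x = w * wInv w * (u * wInv u) ∧ y = u * wInv u * (w * wInv w))

/-- The congruence defining the one-relator inverse monoid `Inv⟨Fin n | w = 1⟩`: generated by
the Vagner congruence together with the single pair `(w, 1)`. -/
def oneRelatorInvCon {n : ℕ} (w : FreeMonoid (Fin n × Bool)) : Con (FreeMonoid (Fin n × Bool)) :=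
  conGen (fun x y => vagnerRel (Fin n) x y ∨ (x = w ∧ y = 1))

instance {α : Type*} [Primcodable α] : Primcodable (FreeMonoid α) :=
  Primcodable.ofEquiv (List α) FreeMonoid.toList

/-!
For primitive recursive `f` there is a finite automaton with one counter, whose edges replace a
value `α k + β` by `γ k + δ`, that can run from the value `2 ^ n` to `0` if and only if `f n k = 0`
for some `k`: a register program guesses `k` and computes `f n k`, and its registers are encoded in
one number by prime powers. Hence the halting problem reduces to the runs of such an automaton.

For a finite graph whose edges are labelled by words in the generators of a group `⟨C | r = 1⟩`,
add a letter `p` for every vertex to the generators `C`. In an inverse monoid a product of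
idempotents `w w⁻¹` is `1` only if every factor is, so the single relation `∏ w w⁻¹ · r = 1` makes
the letters of `C` units with `r = 1`, and makes the word `p u q⁻¹` right invertible for every edge
`u` from `p` to `q`. By the cancellation `p u q⁻¹ · q v s⁻¹ ↦ p u v s⁻¹`, right invertibility passes
from edges to paths. Conversely, whenever the group acts on a countable set with an infinite subset
for each vertex and every edge maps its subsets into each other, embeddings onto these subsets give
a representation by partial bijections, in which only words `p u q⁻¹` with this mapping property
are right invertible.

In `⟨a, t | [a, t a t⁻¹] = 1⟩` the power `a⁻ˣ` can represent the counter value `x`. As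
`b = t a t⁻¹` commutes with `a`, the words `a⁻ᵝ`, `(a⁻ᵅ bᵞ)ᵏ` and `bᵟ t` of the edges that
simulate an edge of the automaton multiply to `a⁻⁽ᵅᵏ⁺ᵝ⁾ t aᵞᵏ⁺ᵟ`. The action on lamplighter
configurations shows that other paths do not reach the final vertex: a division with a remainder
leaves behind a lamp that is never switched off.
-/

/-! ### Register programs -/

/-- Nondeterministic structured programs acting on registers indexed by `ℕ`. A run gets stuck at
`dec i` if register `i` is zero and at `testZero i` if it is not; `star P` runs `P` an arbitrary
number of times. -/
inductive RegisterProgram : Type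
  | inc (i : ℕ)
  | dec (i : ℕ)
  | testZero (i : ℕ)
  | seq (P Q : RegisterProgram)
  | star (P : RegisterProgram)

namespace RegisterProgram

open Function

/-- The input-output relation of a register program. -/
def Exec : RegisterProgram → (ℕ → ℕ) → (ℕ → ℕ) → Prop
  | inc i, s, u => u = update s i (s i + 1)
  | dec i, s, u => 0 < s i ∧ u = update s i (s i - 1)
  | testZero i, s, u => s i = 0 ∧ u = s
  | seq P Q, s, u => ∃ m, Exec P s m ∧ Exec Q m u
  | star P, s, u => Relation.ReflTransGen (Exec P) s u

/-- Started from `s`, the program `P` can terminate, and only in the state `t`. -/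
def RunsTo (P : RegisterProgram) (s t : ℕ → ℕ) : Prop :=
  ∀ s', Exec P s s' ↔ s' = t

section RunsTo

variable {P Q : RegisterProgram} {s m t : ℕ → ℕ} {i r : ℕ}

theorem RunsTo.exec_seq_iff (h : RunsTo P s m) : Exec (seq P Q) s t ↔ Exec Q m t := by
  simp [Exec, h _]

theorem RunsTo.seq (h₁ : RunsTo P s m) (h₂ : RunsTo Q m t) : RunsTo (seq P Q) s t :=
  fun s' => h₁.exec_seq_iff.trans (h₂ s')

theorem runsTo_inc (s : ℕ → ℕ) (i : ℕ) : RunsTo (inc i) s (update s i (s i + 1)) :=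
  fun _ => Iff.rfl

theorem runsTo_dec (h : 0 < s i) : RunsTo (dec i) s (update s i (s i - 1)) :=
  fun _ => and_iff_right h

/-- The program that does nothing. -/
def skip : RegisterProgram := .seq (inc 0) (dec 0)

theorem runsTo_skip (s : ℕ → ℕ) : RunsTo skip s s := by
  have hdec := runsTo_dec (s := update s 0 (s 0 + 1)) (i := 0) (by simp)
  exact (runsTo_inc s 0).seq (by simpa using hdec)

/-- The loop that decrements register `r` and runs `P`, until register `r` is zero. -/
def drain (r : ℕ) (P : RegisterProgram) : RegisterProgram :=
  .seq (star (.seq (dec r) P)) (testZero r)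

theorem exec_drain_iff :
    Exec (drain r P) s t ↔ Relation.ReflTransGen (Exec (.seq (dec r) P)) s t ∧ t r = 0 := by
  simp only [drain, Exec]
  constructor
  · rintro ⟨m, hm, h, rfl⟩
    exact ⟨hm, h⟩
  · rintro ⟨ht, h⟩
    exact ⟨t, ht, h, rfl⟩

theorem runsTo_drain_of_zero (h : s r = 0) : RunsTo (drain r P) s s := by
  intro s'
  rw [exec_drain_iff, Relation.ReflTransGen.cases_head_iff]
  constructor
  · rintro ⟨rfl | ⟨m, ⟨m', ⟨hpos, -⟩, -⟩, -⟩, -⟩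
    · rfl
    · omega
  · rintro rfl
    exact ⟨.inl rfl, h⟩

theorem RunsTo.drain_of_pos (hpos : 0 < s r) (hP : RunsTo P (update s r (s r - 1)) m)
    (hm : RunsTo (drain r P) m t) : RunsTo (drain r P) s t := by
  have hbody : RunsTo (.seq (dec r) P) s m := (runsTo_dec hpos).seq hP
  intro s'
  rw [← hm s', exec_drain_iff, exec_drain_iff, Relation.ReflTransGen.cases_head_iff]
  simp only [hbody _, exists_eq_left, or_and_right, or_iff_right_iff_imp]
  rintro ⟨rfl, h⟩
  omega

/-- Here `st j k` is the state after `j` rounds of the loop, when `k` rounds remain. -/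
theorem runsTo_drain {st : ℕ → ℕ → ℕ → ℕ} (hr : ∀ j k, st j k r = k)
    (hP : ∀ j k, RunsTo P (update (st j (k + 1)) r k) (st (j + 1) k)) (j k : ℕ) :
    RunsTo (drain r P) (st j k) (st (j + k) 0) := by
  induction k generalizing j with
  | zero => exact runsTo_drain_of_zero (hr j 0)
  | succ k ih =>
    refine .drain_of_pos (by simp [hr]) (m := st (j + 1) k) ?_ ?_
    · simpa [hr] using hP j k
    · rw [← add_assoc, add_right_comm]
      exact ih (j + 1)

/-- The program that sets register `r` to zero. -/
def clear (r : ℕ) : RegisterProgram := drain r skip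

theorem runsTo_clear (s : ℕ → ℕ) (r : ℕ) : RunsTo (clear r) s (update s r 0) := by
  convert runsTo_drain (st := fun _ k => update s r k) _ _ 0 (s r) using 1
  · rfl
  · simp
  · simp
  · simpa using fun k => runsTo_skip (update s r k)

/-- The program that adds register `r` to register `o` and sets register `r` to zero. -/
def transfer (r o : ℕ) : RegisterProgram := drain r (inc o)

theorem runsTo_transfer {r o : ℕ} (hro : r ≠ o) (s : ℕ → ℕ) :
    RunsTo (transfer r o) s (update (update s o (s o + s r)) r 0) := by
  convert runsTo_drain (st := fun j k => update (update s o (s o + j)) r k) _ _ 0 (s r) using 1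
  · rfl
  · simp
  · simp
  · simp
  · intro j k
    convert runsTo_inc _ _ using 1
    grind [update_apply]

/-- The program that adds register `r` to register `o`, using the empty register `t` to restore
register `r`. -/
def copy (r o t : ℕ) : RegisterProgram :=
  .seq (drain r (.seq (inc o) (inc t))) (transfer t r)

theorem runsTo_copy {r o t : ℕ} (hro : r ≠ o) (hrt : r ≠ t) (hot : o ≠ t) (ht : s t = 0) :
    RunsTo (copy r o t) s (update s o (s o + s r)) := by
  have hdrain : RunsTo (drain r (.seq (inc o) (inc t))) s
      (update (update (update s o (s o + s r)) t (s r)) r 0) := by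
    convert runsTo_drain (st := fun j k => update (update (update s o (s o + j)) t j) r k)
      _ _ 0 (s r) using 1
    · grind [update_apply]
    · simp
    · simp
    · intro j k
      convert (runsTo_inc _ _).seq (runsTo_inc _ _) using 1
      grind [update_apply]
  convert hdrain.seq (runsTo_transfer hrt.symm _) using 1
  · rfl
  · grind [update_apply]

end RunsTo

/-- The state that agrees with `s` on the registers below `b`, lists the entries of `l` from
register `b` on, and is zero afterwards. -/
def layout (b : ℕ) (s : ℕ → ℕ) (l : List ℕ) : ℕ → ℕ :=
  fun r => if r < b then s r else l.getD (r - b) 0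

section layout

variable {b i n : ℕ} {s : ℕ → ℕ} {l : List ℕ}

theorem layout_of_lt (h : i < b) : layout b s l i = s i :=
  if_pos h

@[simp]
theorem layout_add (b : ℕ) (s : ℕ → ℕ) (l : List ℕ) (i : ℕ) :
    layout b s l (b + i) = l.getD i 0 := by
  simp [layout]

theorem layout_layout (hb : b + l.length = n) (l' : List ℕ) :
    layout n (layout b s l) l' = layout b s (l ++ l') := by
  subst hb
  funext r
  grind [layout]

theorem layout_append_zero (b : ℕ) (s : ℕ → ℕ) (l : List ℕ) :
    layout b s (l ++ [0]) = layout b s l := by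
  funext r
  grind [layout]

theorem update_layout (h : i < l.length) (y : ℕ) :
    update (layout b s l) (b + i) y = layout b s (l.set i y) := by
  funext r
  grind [layout, update_apply]

@[simp]
theorem layout_self (b : ℕ) (s : ℕ → ℕ) (l : List ℕ) : layout b s l b = l.getD 0 0 :=
  layout_add b s l 0

@[simp]
theorem update_layout_self (b : ℕ) (s : ℕ → ℕ) (x y : ℕ) (l : List ℕ) :
    update (layout b s (x :: l)) b y = layout b s (y :: l) :=
  update_layout (i := 0) (by simp) y

/-- The program that sets the `n` registers from `b` on to zero. -/
def clearBlock (b : ℕ) : ℕ → RegisterProgram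
  | 0 => skip
  | n + 1 => .seq (clear (b + n)) (clearBlock b n)

theorem runsTo_clearBlock (b : ℕ) (s : ℕ → ℕ) (l : List ℕ) :
    RunsTo (clearBlock b l.length) (layout b s l) (layout b s []) := by
  induction l using List.reverseRecOn with
  | nil => exact runsTo_skip _
  | append_singleton l y ih =>
    rw [List.length_append]
    refine RunsTo.seq ?_ ih
    simpa [update_layout, layout_append_zero] using
      runsTo_clear (layout b s (l ++ [y])) (b + l.length)

end layout

/-- A function is programmable if, for any input registers below `b`, some program stores its
value in register `b`, given that the registers from `b` on are zero. -/
def IsProgrammable {n : ℕ} (f : List.Vector ℕ n → ℕ) : Prop :=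
  ∀ (inp : Fin n → ℕ) (b : ℕ), (∀ i, inp i < b) →
    ∃ P, ∀ s, RunsTo P (layout b s []) (layout b s [f (.ofFn fun i => s (inp i))])

section IsProgrammable

theorem isProgrammable_zero : IsProgrammable (n := 0) fun _ => 0 := by
  refine fun inp b _ => ⟨skip, fun s => ?_⟩
  simpa [← layout_append_zero b s []] using runsTo_skip (layout b s [])

theorem runsTo_copy_layout {s : ℕ → ℕ} {b r : ℕ} (hr : r < b) (l : List ℕ) :
    RunsTo (copy r (b + l.length) (b + l.length + 1)) (layout b s l) (layout b s (l ++ [s r])) := by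
  convert runsTo_copy (s := layout b s l) _ _ _ _ using 1
  · funext i
    grind [layout, update_apply]
  all_goals grind [layout]

theorem isProgrammable_get {n : ℕ} (i : Fin n) : IsProgrammable fun v => v.get i := by
  refine fun inp b hinp => ⟨copy (inp i) b (b + 1), fun s => ?_⟩
  simpa using runsTo_copy_layout (hinp i) []

theorem isProgrammable_succ : IsProgrammable (n := 1) fun v => v.head.succ := by
  refine fun inp b hinp => ⟨.seq (copy (inp 0) b (b + 1)) (inc b), fun s => ?_⟩
  refine (runsTo_copy_layout (hinp 0) []).seq ?_
  convert runsTo_inc _ b using 1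
  funext r
  grind [layout, update_apply, List.Vector.ofFn]

theorem exists_runsTo_layout_ofFn {m n : ℕ} {g : Fin n → List.Vector ℕ m → ℕ}
    (hg : ∀ i, IsProgrammable (g i)) (inp : Fin m → ℕ) (b : ℕ) (hinp : ∀ i, inp i < b) :
    ∃ P, ∀ s, RunsTo P (layout b s [])
      (layout b s (List.ofFn fun i => g i (.ofFn fun j => s (inp j)))) := by
  induction n generalizing b with
  | zero => exact ⟨skip, fun s => by simpa using runsTo_skip _⟩
  | succ n ih =>
    obtain ⟨P₀, hP₀⟩ := hg 0 inp b hinp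
    obtain ⟨P, hP⟩ := ih (fun i => hg i.succ) (b + 1) fun i => (hinp i).trans b.lt_succ_self
    refine ⟨.seq P₀ P, fun s => (hP₀ s).seq ?_⟩
    simpa [layout_layout, layout_of_lt, hinp] using hP (layout b s [g 0 (.ofFn fun j => s (inp j))])

theorem IsProgrammable.comp {m n : ℕ} {f : List.Vector ℕ n → ℕ} {g : Fin n → List.Vector ℕ m → ℕ}
    (hf : IsProgrammable f) (hg : ∀ i, IsProgrammable (g i)) :
    IsProgrammable fun v => f (.ofFn fun i => g i v) := by
  intro inp b hinp
  obtain ⟨P, hP⟩ := exists_runsTo_layout_ofFn hg inp (b + 1) fun i => (hinp i).trans b.lt_succ_self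
  obtain ⟨Q, hQ⟩ := hf (fun i => b + 1 + i) (b + 1 + n) fun i => by omega
  refine ⟨.seq P (.seq Q (.seq (transfer (b + 1 + n) b) (clearBlock (b + 1) n))), fun s => ?_⟩
  set args := List.ofFn fun i => g i (.ofFn fun j => s (inp j)) with hargs
  have hlen : args.length = n := List.length_ofFn
  set y := f (.ofFn fun i => g i (.ofFn fun j => s (inp j)))
  have hP' : RunsTo P (layout b s []) (layout b s (0 :: args)) := by
    rw [← layout_append_zero b s []]
    simpa [layout_layout, layout_of_lt, hinp] using hP (layout b s [0])
  have hQ' : RunsTo Q (layout b s (0 :: args)) (layout b s (0 :: args ++ [y])) := by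
    convert hQ (layout b s (0 :: args)) using 1
    · simp [layout_layout, hlen, add_right_comm, add_assoc]
    · simp [layout_layout, add_right_comm, add_assoc, hargs, y]
  have htransfer : RunsTo (transfer (b + 1 + n) b) (layout b s (0 :: args ++ [y]))
      (layout b s (y :: args)) := by
    convert runsTo_transfer (r := b + 1 + n) (o := b) (by omega) _ using 1
    funext r
    grind [layout, update_apply]
  have hclear := runsTo_clearBlock (b + 1) (layout b s [y]) args
  simp only [layout_layout, List.length_singleton, List.singleton_append, List.append_nil,
    hlen] at hclear
  exact hP'.seq (hQ'.seq (htransfer.seq hclear))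

/-- One pass of the loop computing a primitive recursion, with registers `b`, `b + 1`, `b + 2`
holding the accumulator, the number of rounds done and the number of rounds left. -/
theorem runsTo_precStep {b j k y z : ℕ} {s : ℕ → ℕ} {Q : RegisterProgram}
    (hQ : RunsTo Q (layout b s [y, j, k]) (layout b s [y, j, k, z])) :
    RunsTo (.seq Q (.seq (clear b) (.seq (transfer (b + 3) b) (inc (b + 1)))))
      (layout b s [y, j, k]) (layout b s [z, j + 1, k]) := by
  have hclear : RunsTo (clear b) (layout b s [y, j, k, z]) (layout b s [0, j, k, z]) := by
    simpa using runsTo_clear (layout b s [y, j, k, z]) b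
  have htransfer : RunsTo (transfer (b + 3) b) (layout b s [0, j, k, z])
      (layout b s ([z, j, k] ++ [0])) := by
    simpa [update_layout] using
      runsTo_transfer (show b + 3 ≠ b by omega) (layout b s [0, j, k, z])
  have hinc : RunsTo (inc (b + 1)) (layout b s [z, j, k]) (layout b s [z, j + 1, k]) := by
    simpa [update_layout] using runsTo_inc (layout b s [z, j, k]) (b + 1)
  rw [layout_append_zero] at htransfer
  exact hQ.seq (hclear.seq (htransfer.seq hinc))

theorem IsProgrammable.prec {n : ℕ} {f : List.Vector ℕ n → ℕ} {g : List.Vector ℕ (n + 2) → ℕ}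
    (hf : IsProgrammable f) (hg : IsProgrammable g) :
    IsProgrammable fun v : List.Vector ℕ (n + 1) =>
      v.head.rec (f v.tail) fun y IH => g (y ::ᵥ IH ::ᵥ v.tail) := by
  intro inp b hinp
  obtain ⟨P, hP⟩ := hf (inp ∘ Fin.succ) b fun i => hinp _
  obtain ⟨Q, hQ⟩ := hg (Fin.cons (b + 1) (Fin.cons b (inp ∘ Fin.succ))) (b + 3) <| by
    simp only [Fin.forall_fin_succ, Fin.cons_zero, Fin.cons_succ, comp_apply]
    exact ⟨by omega, by omega, fun i => (hinp _).trans (by omega)⟩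
  let loop : RegisterProgram :=
    drain (b + 2) (.seq Q (.seq (clear b) (.seq (transfer (b + 3) b) (inc (b + 1)))))
  refine ⟨.seq P (.seq (copy (inp 0) (b + 2) (b + 3)) (.seq loop (clear (b + 1)))), fun s => ?_⟩
  set v := List.Vector.ofFn fun i => s (inp i)
  let F : ℕ → ℕ := fun j => j.rec (f v.tail) fun y IH => g (y ::ᵥ IH ::ᵥ v.tail)
  change RunsTo _ _ (layout b s [F (s (inp 0))])
  have hQ' (j k y : ℕ) : RunsTo Q (layout b s [y, j, k])
      (layout b s [y, j, k, g (j ::ᵥ y ::ᵥ v.tail)]) := by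
    simpa [v, layout_layout, layout_of_lt, hinp, List.Vector.ofFn] using hQ (layout b s [y, j, k])
  have hcopy : RunsTo (copy (inp 0) (b + 2) (b + 3)) (layout b s [F 0])
      (layout b s [F 0, 0, s (inp 0)]) := by
    rw [← layout_append_zero b s [F 0]]
    exact runsTo_copy_layout (hinp 0) [F 0, 0]
  have hloop : RunsTo loop (layout b s [F 0, 0, s (inp 0)])
      (layout b s [F (s (inp 0)), s (inp 0), 0]) := by
    convert runsTo_drain (st := fun j k => layout b s [F j, j, k]) _ _ 0 (s (inp 0)) using 1
    · simp
    · simp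
    · intro j k
      rw [update_layout (by simp)]
      exact runsTo_precStep (hQ' j k (F j))
  have hclear : RunsTo (clear (b + 1)) (layout b s [F (s (inp 0)), s (inp 0), 0])
      (layout b s [F (s (inp 0))]) := by
    convert runsTo_clear _ _ using 1
    funext r
    grind [layout, update_apply]
  exact (hP s).seq (hcopy.seq (hloop.seq hclear))

theorem isProgrammable_of_primrec' {n : ℕ} {f : List.Vector ℕ n → ℕ} (hf : Nat.Primrec' f) :
    IsProgrammable f := by
  induction hf with
  | zero => exact isProgrammable_zero
  | succ => exact isProgrammable_succ
  | get i => exact isProgrammable_get i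
  | comp g _ _ hf hg => exact hf.comp hg
  | prec _ _ hf hg => exact hf.prec hg

end IsProgrammable

end RegisterProgram

/-! ### Labelled graphs as automata with one counter -/

/-- A directed multigraph whose edges are labelled by elements of `L`. -/
structure LabelledGraph (V E L : Type*) where
  src : E → V
  label : E → L
  tgt : E → V

namespace LabelledGraph

open Relation Sum

section Step

variable {V E L α : Type*} (G : LabelledGraph V E L) (rel : L → α → α → Prop)

/-- One step of the automaton with states `V` and memory `α`, in which an edge labelled `l` changes
the memory according to `rel l`. -/
def Step (c d : V × α) : Prop :=
  ∃ e, G.src e = c.1 ∧ G.tgt e = d.1 ∧ rel (G.label e) c.2 d.2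

/-- The relation between the memory in state `i` and the memory in state `f` given by the runs of
the automaton from `i` to `f`. -/
def Connects (i f : V) (x y : α) : Prop :=
  ReflTransGen (G.Step rel) (i, x) (f, y)

variable {G rel}

theorem Connects.step {i : V} {x y z : α} {e : E} (h : G.Connects rel i (G.src e) x y)
    (hyz : rel (G.label e) y z) : G.Connects rel i (G.tgt e) x z :=
  h.tail ⟨e, rfl, rfl, hyz⟩

theorem Connects.trans {i j k : V} {x y z : α} (hij : G.Connects rel i j x y)
    (hjk : G.Connects rel j k y z) : G.Connects rel i k x z :=
  ReflTransGen.trans hij hjk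

theorem Connects.invariant {i f : V} {x y : α} (p : V → α → Prop) (hi : p i x)
    (hstep : ∀ e a b, p (G.src e) a → rel (G.label e) a b → p (G.tgt e) b)
    (h : G.Connects rel i f x y) : p f y := by
  suffices ∀ c, ReflTransGen (G.Step rel) (i, x) c → p c.1 c.2 from this _ h
  intro c hc
  induction hc with
  | refl => exact hi
  | tail _ hbc ih =>
    obtain ⟨e, hsrc, htgt, hrel⟩ := hbc
    exact htgt ▸ hstep e _ _ (hsrc.symm ▸ ih) hrel

theorem Connects.map {V' E' : Type*} {G' : LabelledGraph V' E' L} {i f : V} {x y : α}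
    (φ : V → V') (ψ : E → E') (hsrc : ∀ e, G'.src (ψ e) = φ (G.src e))
    (hlabel : ∀ e, G'.label (ψ e) = G.label e) (htgt : ∀ e, G'.tgt (ψ e) = φ (G.tgt e))
    (h : G.Connects rel i f x y) : G'.Connects rel (φ i) (φ f) x y := by
  refine h.invariant (fun v z => G'.Connects rel (φ i) (φ v) x z) .refl fun e a b ha hab => ?_
  rw [← hsrc] at ha
  exact htgt e ▸ ha.step ((hlabel e).symm ▸ hab)

end Step

section Constructions

variable {V V₁ V₂ E E₁ E₂ L α : Type*} {rel : L → α → α → Prop}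

/-- The graph with two vertices and one edge from `false` to `true` for each element of `ι`. -/
def parallel {ι : Type*} (label : ι → L) : LabelledGraph Bool ι L where
  src _ := false
  label := label
  tgt _ := true

theorem connects_parallel_iff {ι : Type*} {label : ι → L} {x y : α} :
    (parallel label).Connects rel false true x y ↔ ∃ e, rel (label e) x y := by
  refine ⟨fun h => ?_, fun ⟨e, he⟩ => Connects.step (e := e) .refl he⟩
  refine h.invariant (fun v z => match v with
    | false => z = x
    | true => ∃ e, rel (label e) x z) rfl ?_
  rintro e _ b rfl hb
  exact ⟨e, hb⟩

/-- The disjoint union of two graphs with an additional edge, labelled `l`, from the vertex `f₁`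
of the first graph to the vertex `i₂` of the second one. -/
def concat (G₁ : LabelledGraph V₁ E₁ L) (G₂ : LabelledGraph V₂ E₂ L) (f₁ : V₁) (l : L) (i₂ : V₂) :
    LabelledGraph (V₁ ⊕ V₂) (Option (E₁ ⊕ E₂)) L where
  src e := e.elim (inl f₁) (Sum.map G₁.src G₂.src)
  label e := e.elim l (Sum.elim G₁.label G₂.label)
  tgt e := e.elim (inr i₂) (Sum.map G₁.tgt G₂.tgt)

theorem connects_concat_iff {G₁ : LabelledGraph V₁ E₁ L} {G₂ : LabelledGraph V₂ E₂ L} {l : L}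
    (hl : ∀ x y, rel l x y ↔ x = y) {i₁ f₁ : V₁} {i₂ f₂ : V₂} {x y : α} :
    (G₁.concat G₂ f₁ l i₂).Connects rel (inl i₁) (inr f₂) x y ↔
      Comp (G₁.Connects rel i₁ f₁) (G₂.Connects rel i₂ f₂) x y := by
  constructor
  · intro h
    refine h.invariant (fun v z => match v with
      | inl v => G₁.Connects rel i₁ v x z
      | inr v => Comp (G₁.Connects rel i₁ f₁) (G₂.Connects rel i₂ v) x z) .refl ?_
    rintro (_ | e | e) a b ha hab
    · exact ⟨a, ha, (hl a b).1 hab ▸ .refl⟩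
    · exact ha.step hab
    · exact ha.imp fun m hm => ⟨hm.1, hm.2.step hab⟩
  · rintro ⟨m, h₁, h₂⟩
    have left : (G₁.concat G₂ f₁ l i₂).Connects rel (inl i₁) (inl f₁) x m :=
      h₁.map inl (some ∘ inl) (fun _ => rfl) (fun _ => rfl) fun _ => rfl
    have right : (G₁.concat G₂ f₁ l i₂).Connects rel (inr i₂) (inr f₂) m y :=
      h₂.map inr (some ∘ inr) (fun _ => rfl) (fun _ => rfl) fun _ => rfl
    exact (Connects.step (e := none) left ((hl m m).2 rfl)).trans right

/-- The graph with an additional vertex `none`, an edge from `none` to `i` and an edge from `f` to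
`none`, both labelled `l`. -/
def loop (G : LabelledGraph V E L) (l : L) (i f : V) :
    LabelledGraph (Option V) (Bool ⊕ E) L where
  src := Sum.elim (Bool.rec none (some f)) (some ∘ G.src)
  label := Sum.elim (fun _ => l) G.label
  tgt := Sum.elim (Bool.rec (some i) none) (some ∘ G.tgt)

theorem connects_loop_iff {G : LabelledGraph V E L} {l : L} (hl : ∀ x y, rel l x y ↔ x = y)
    {i f : V} {x y : α} :
    (G.loop l i f).Connects rel none none x y ↔ ReflTransGen (G.Connects rel i f) x y := by
  constructor
  · intro h
    refine h.invariant (fun v z => match v with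
      | none => ReflTransGen (G.Connects rel i f) x z
      | some v => Comp (ReflTransGen (G.Connects rel i f)) (G.Connects rel i v) x z) .refl ?_
    rintro ((_ | _) | e) a b ha hab
    · exact ⟨a, ha, (hl a b).1 hab ▸ .refl⟩
    · obtain ⟨m, hxm, hma⟩ := ha
      exact (hl a b).1 hab ▸ hxm.tail hma
    · exact ha.imp fun m hm => ⟨hm.1, hm.2.step hab⟩
  · intro h
    induction h with
    | refl => exact .refl
    | @tail m m' _ hm ih =>
      have hi : (G.loop l i f).Connects rel none (some i) x m :=
        Connects.step (e := inl false) ih ((hl m m).2 rfl)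
      have hm' : (G.loop l i f).Connects rel (some i) (some f) m m' :=
        hm.map some inr (fun _ => rfl) (fun _ => rfl) fun _ => rfl
      exact Connects.step (e := inl true) (hi.trans hm') ((hl m' m').2 rfl)

end Constructions

/-- A relation is realizable if it is the relation between the memories in two states of some
automaton with finitely many states and edges. -/
def Realizable {L α : Type*} (rel : L → α → α → Prop) (R : α → α → Prop) : Prop :=
  ∃ (V E : Type) (_ : Finite V) (_ : Finite E) (G : LabelledGraph V E L) (i f : V),
    ∀ x y, G.Connects rel i f x y ↔ R x y

section Realizable

variable {L α : Type*} {rel : L → α → α → Prop} {R S : α → α → Prop} {l : L}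

theorem realizable_exists {ι : Type} [Finite ι] (label : ι → L) :
    Realizable rel fun x y => ∃ e, rel (label e) x y :=
  ⟨Bool, ι, inferInstance, ‹_›, parallel label, false, true, fun _ _ => connects_parallel_iff⟩

theorem realizable_label (l : L) : Realizable rel (rel l) := by
  simpa using realizable_exists (rel := rel) fun _ : Unit => l

theorem Realizable.comp (hl : ∀ x y, rel l x y ↔ x = y) (hR : Realizable rel R)
    (hS : Realizable rel S) : Realizable rel (Comp R S) := by
  obtain ⟨V₁, E₁, _, _, G₁, i₁, f₁, h₁⟩ := hR
  obtain ⟨V₂, E₂, _, _, G₂, i₂, f₂, h₂⟩ := hS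
  refine ⟨_, _, inferInstance, inferInstance, G₁.concat G₂ f₁ l i₂, inl i₁, inr f₂, fun x y => ?_⟩
  simp only [connects_concat_iff hl, Comp, h₁, h₂]

theorem Realizable.reflTransGen (hl : ∀ x y, rel l x y ↔ x = y) (hR : Realizable rel R) :
    Realizable rel (ReflTransGen R) := by
  obtain ⟨V, E, _, _, G, i, f, h⟩ := hR
  refine ⟨_, _, inferInstance, inferInstance, G.loop l i f, none, none, fun x y => ?_⟩
  have hG : G.Connects rel i f = R := funext₂ fun x y => propext (h x y)
  rw [connects_loop_iff hl, hG]

end Realizable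

end LabelledGraph

/-- `r` is simulated by `R` along the encoding `e` if the encoded successors of `a` under `r` are
exactly the successors of `e a` under `R`. -/
def Simulates {α β : Type*} (e : α → β) (r : α → α → Prop) (R : β → β → Prop) : Prop :=
  ∀ a y, R (e a) y ↔ ∃ a', r a a' ∧ e a' = y

section Simulates

open Relation

variable {α β : Type*} {e : α → β} {r s : α → α → Prop} {R S : β → β → Prop}

theorem Simulates.comp (hr : Simulates e r R) (hs : Simulates e s S) :
    Simulates e (Comp r s) (Comp R S) := by
  intro a y
  constructor
  · rintro ⟨_, hR, hS⟩
    obtain ⟨m, hm, rfl⟩ := (hr _ _).1 hR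
    obtain ⟨a', ha', rfl⟩ := (hs _ _).1 hS
    exact ⟨a', ⟨m, hm, ha'⟩, rfl⟩
  · rintro ⟨a', ⟨m, hm, ha'⟩, rfl⟩
    exact ⟨e m, (hr _ _).2 ⟨m, hm, rfl⟩, (hs _ _).2 ⟨a', ha', rfl⟩⟩

theorem Simulates.reflTransGen (hr : Simulates e r R) :
    Simulates e (ReflTransGen r) (ReflTransGen R) := by
  intro a y
  constructor
  · intro h
    induction h with
    | refl => exact ⟨a, .refl, rfl⟩
    | tail _ hR ih =>
      obtain ⟨m, hm, rfl⟩ := ih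
      obtain ⟨a', ha', rfl⟩ := (hr _ _).1 hR
      exact ⟨a', hm.tail ha', rfl⟩
  · rintro ⟨a', h, rfl⟩
    exact h.lift e fun b c hbc => (hr _ _).2 ⟨c, hbc, rfl⟩

end Simulates

/-! ### Affine automata -/

/-- A label of an affine automaton: it replaces a counter value of the form `α * k + β` by
`γ * k + δ`. -/
structure AffineLabel where
  α : ℕ
  β : ℕ
  γ : ℕ
  δ : ℕ

/-- The relation between the counter values before and after an edge labelled `l`. -/
def AffineLabel.Rel (l : AffineLabel) (x y : ℕ) : Prop :=
  ∃ k, x = l.α * k + l.β ∧ y = l.γ * k + l.δ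

theorem AffineLabel.rel_id_iff (x y : ℕ) : (mk 1 0 1 0).Rel x y ↔ x = y := by
  simp [Rel, eq_comm]

theorem AffineLabel.exists_rel_residue_iff {p x y : ℕ} (hp : 0 < p) :
    (∃ j : Fin (p - 1), (mk p (j + 1) p (j + 1)).Rel x y) ↔ ¬ p ∣ x ∧ x = y := by
  constructor
  · rintro ⟨j, k, rfl, rfl⟩
    rw [Nat.dvd_add_right (dvd_mul_right p k)]
    have hlt : j.val + 1 < p := by omega
    exact ⟨Nat.not_dvd_of_pos_of_lt j.val.succ_pos hlt, rfl⟩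
  · rintro ⟨hpx, rfl⟩
    have hpos : 0 < x % p := Nat.pos_of_ne_zero fun h => hpx (Nat.dvd_of_mod_eq_zero h)
    have hlt : x % p < p := Nat.mod_lt x hp
    have hx : x = p * (x / p) + (x % p - 1 + 1) := by
      rw [Nat.sub_add_cancel hpos, Nat.div_add_mod]
    exact ⟨⟨x % p - 1, by omega⟩, x / p, hx, hx⟩

/-- The Gödel number of the registers below `M`. -/
noncomputable def goedelNumber (M : ℕ) (s : ℕ → ℕ) : ℕ :=
  ∏ i ∈ Finset.range M, Nat.nth Nat.Prime i ^ s i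

section goedelNumber

open Function

variable {M i : ℕ}

theorem goedelNumber_update_succ (hi : i < M) (s : ℕ → ℕ) :
    goedelNumber M (update s i (s i + 1)) = Nat.nth Nat.Prime i * goedelNumber M s := by
  have hmem : i ∈ Finset.range M := Finset.mem_range.2 hi
  have hupdate (j : ℕ) : Nat.nth Nat.Prime j ^ update s i (s i + 1) j =
      update (fun j => Nat.nth Nat.Prime j ^ s j) i (Nat.nth Nat.Prime i ^ (s i + 1)) j :=
    apply_update (fun j k => Nat.nth Nat.Prime j ^ k) s i _ j
  simp only [goedelNumber, hupdate]
  rw [Finset.prod_update_of_mem hmem, Finset.sdiff_singleton_eq_erase,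
    ← Finset.mul_prod_erase _ _ hmem, pow_succ']
  ring

theorem nth_prime_dvd_goedelNumber_iff (hi : i < M) (s : ℕ → ℕ) :
    Nat.nth Nat.Prime i ∣ goedelNumber M s ↔ 0 < s i := by
  have hprime (j : ℕ) : (Nat.nth Nat.Prime j).Prime := Nat.prime_nth_prime j
  rw [goedelNumber, (hprime i).prime.dvd_finsetProd_iff]
  constructor
  · rintro ⟨j, -, hj⟩
    obtain rfl : i = j := Nat.nth_injective Nat.infinite_setOfPred_prime
      ((Nat.prime_dvd_prime_iff_eq (hprime i) (hprime j)).1 ((hprime i).dvd_of_dvd_pow hj))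
    refine Nat.pos_of_ne_zero fun h => (hprime i).one_lt.ne' ?_
    rwa [h, pow_zero, Nat.dvd_one] at hj
  · exact fun h => ⟨i, Finset.mem_range.2 hi, dvd_pow_self _ h.ne'⟩

theorem goedelNumber_layout_singleton (hM : 0 < M) (n : ℕ) :
    goedelNumber M (RegisterProgram.layout 0 0 [n]) = 2 ^ n := by
  rw [goedelNumber, Finset.prod_eq_single_of_mem 0 (Finset.mem_range.2 hM)]
  · simp [Nat.nth_prime_zero_eq_two]
  · intro j _ hj
    have hzero : RegisterProgram.layout 0 0 [n] j = 0 := by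
      grind [RegisterProgram.layout]
    rw [hzero, pow_zero]

theorem goedelNumber_layout_nil (M : ℕ) : goedelNumber M (RegisterProgram.layout 0 0 []) = 1 := by
  simp [goedelNumber, RegisterProgram.layout]

end goedelNumber

namespace RegisterProgram

open Function LabelledGraph

variable {M i : ℕ}

theorem exec_dec_iff {s s' : ℕ → ℕ} : Exec (dec i) s s' ↔ Exec (inc i) s' s := by
  simp only [Exec]
  constructor
  · rintro ⟨hpos, rfl⟩
    simp [Nat.sub_add_cancel hpos]
  · rintro rfl
    simp

theorem simulates_inc (hi : i < M) : Simulates (goedelNumber M) (Exec (inc i))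
    (AffineLabel.mk 1 0 (Nat.nth Nat.Prime i) 0).Rel := by
  intro s y
  simp [AffineLabel.Rel, Exec, goedelNumber_update_succ hi, eq_comm]

theorem simulates_dec (hi : i < M) : Simulates (goedelNumber M) (Exec (dec i))
    (AffineLabel.mk (Nat.nth Nat.Prime i) 0 1 0).Rel := by
  intro s y
  simp only [AffineLabel.Rel, exec_dec_iff, add_zero, one_mul, exists_eq_right']
  constructor
  · intro h
    have hpos : 0 < s i := (nth_prime_dvd_goedelNumber_iff hi s).1 ⟨y, h⟩
    obtain hs : Exec (inc i) (update s i (s i - 1)) s := exec_dec_iff.1 ⟨hpos, rfl⟩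
    refine ⟨_, hs, Nat.eq_of_mul_eq_mul_left (Nat.prime_nth_prime i).pos ?_⟩
    rw [← h, ← goedelNumber_update_succ hi, ← hs]
  · rintro ⟨s', rfl, rfl⟩
    exact goedelNumber_update_succ hi s'

theorem simulates_testZero (hi : i < M) :
    Simulates (goedelNumber M) (Exec (testZero i)) fun x y => ∃ j : Fin (Nat.nth Nat.Prime i - 1),
      (AffineLabel.mk (Nat.nth Nat.Prime i) (j + 1) (Nat.nth Nat.Prime i) (j + 1)).Rel x y := by
  intro s y
  refine (AffineLabel.exists_rel_residue_iff (Nat.prime_nth_prime i).pos).trans ?_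
  rw [nth_prime_dvd_goedelNumber_iff hi]
  simp [Exec, and_assoc]

/-- A bound for the registers that occur in a program. -/
def bound : RegisterProgram → ℕ
  | inc i => i + 1
  | dec i => i + 1
  | testZero i => i + 1
  | seq P Q => max (bound P) (bound Q)
  | star P => bound P

theorem exists_realizable_simulates (P : RegisterProgram) (hP : P.bound ≤ M) :
    ∃ R, Realizable AffineLabel.Rel R ∧ Simulates (goedelNumber M) (Exec P) R := by
  induction P with
  | inc i => exact ⟨_, realizable_label _, simulates_inc hP⟩
  | dec i => exact ⟨_, realizable_label _, simulates_dec hP⟩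
  | testZero i => exact ⟨_, realizable_exists _, simulates_testZero hP⟩
  | seq P Q ihP ihQ =>
    obtain ⟨R, hR, hPR⟩ := ihP ((le_max_left _ _).trans hP)
    obtain ⟨S, hS, hQS⟩ := ihQ ((le_max_right _ _).trans hP)
    exact ⟨_, hR.comp AffineLabel.rel_id_iff hS, hPR.comp hQS⟩
  | star P ih =>
    obtain ⟨R, hR, hPR⟩ := ih hP
    exact ⟨_, hR.reflTransGen AffineLabel.rel_id_iff, hPR.reflTransGen⟩

theorem exec_star_inc_layout_iff {s' : ℕ → ℕ} {n : ℕ} :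
    Exec (star (inc 1)) (layout 0 0 [n]) s' ↔ ∃ k, s' = layout 0 0 [n, k] := by
  have hinc (k : ℕ) : RunsTo (inc 1) (layout 0 0 [n, k]) (layout 0 0 [n, k + 1]) := by
    convert runsTo_inc (layout 0 0 [n, k]) 1 using 1
    grind [layout, update_apply]
  have hzero : layout 0 0 [n] = layout 0 0 [n, 0] := (layout_append_zero 0 0 [n]).symm
  simp only [Exec, hzero]
  constructor
  · intro h
    induction h with
    | refl => exact ⟨0, rfl⟩
    | tail _ hstep ih =>
      obtain ⟨k, rfl⟩ := ih
      exact ⟨k + 1, (hinc k _).1 hstep⟩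
  · rintro ⟨k, rfl⟩
    induction k with
    | zero => exact .refl
    | succ k ih => exact ih.tail ((hinc k _).2 rfl)

/-- The program guesses a value `k` in register `1`, and checks `f n k = 0`. -/
theorem exists_exec_iff_exists_eq_zero {f : ℕ → ℕ → ℕ} (hf : Primrec₂ f) :
    ∃ P, ∀ n s', Exec P (layout 0 0 [n]) s' ↔ (∃ k, f n k = 0) ∧ s' = layout 0 0 [] := by
  obtain ⟨P, hP⟩ := isProgrammable_of_primrec' (Nat.Primrec'.prim_iff₂.2 hf) Fin.val 2 Fin.is_lt
  have hP' (n k : ℕ) : RunsTo P (layout 0 0 [n, k]) (layout 0 0 [n, k, f n k]) := by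
    have hk : layout 0 0 [n, k] 1 = k := rfl
    simpa [layout_layout, List.Vector.ofFn, hk] using hP (layout 0 0 [n, k])
  refine ⟨.seq (star (inc 1)) (.seq P (.seq (testZero 2) (clearBlock 0 3))), fun n s' => ?_⟩
  have hrest (k : ℕ) :
      Exec (.seq P (.seq (testZero 2) (clearBlock 0 3))) (layout 0 0 [n, k]) s' ↔
        f n k = 0 ∧ s' = layout 0 0 [] := by
    rw [(hP' n k).exec_seq_iff]
    have hclear := runsTo_clearBlock 0 0 [n, k, f n k] s'
    simp only [List.length_cons, List.length_nil] at hclear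
    simp [Exec, layout, ← hclear, and_assoc]
  rw [Exec]
  simp only [exec_star_inc_layout_iff]
  simp [hrest]

end RegisterProgram

open LabelledGraph in
theorem exists_connects_iff_exists_eq_zero {f : ℕ → ℕ → ℕ} (hf : Primrec₂ f) :
    ∃ (V E : Type) (_ : Fintype V) (_ : Fintype E) (A : LabelledGraph V E AffineLabel) (i j : V),
      ∀ n, A.Connects AffineLabel.Rel i j (2 ^ n) 0 ↔ ∃ k, f n k = 0 := by
  obtain ⟨P, hP⟩ := RegisterProgram.exists_exec_iff_exists_eq_zero hf
  obtain ⟨R, hR, hPR⟩ := P.exists_realizable_simulates (M := P.bound + 1) P.bound.le_succ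
  obtain ⟨V, E, _, _, A, i, j, hA⟩ :=
    hR.comp AffineLabel.rel_id_iff (realizable_label (AffineLabel.mk 0 1 0 0))
  refine ⟨V, E, .ofFinite V, .ofFinite E, A, i, j, fun n => ?_⟩
  rw [hA, ← goedelNumber_layout_singleton P.bound.succ_pos]
  simp only [Relation.Comp, hPR _ _, hP, AffineLabel.Rel]
  simp [goedelNumber_layout_nil]

/-! ### Right invertible words in inverse monoids -/

section wInv

variable {B C : Type*}

@[simp]
theorem wInv_of (x : B × Bool) : wInv (FreeMonoid.of x) = FreeMonoid.of (x.1, !x.2) := rfl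

@[simp]
theorem wInv_one : wInv (1 : FreeMonoid (B × Bool)) = 1 := rfl

@[simp]
theorem wInv_mul (u v : FreeMonoid (B × Bool)) : wInv (u * v) = wInv v * wInv u := by
  simp [wInv]

theorem wInv_pow (u : FreeMonoid (B × Bool)) (n : ℕ) :
    wInv (u ^ n) = wInv u ^ n := by
  induction n with
  | zero => rfl
  | succ n ih => rw [pow_succ, wInv_mul, ih, pow_succ']

@[simp]
theorem wInv_wInv (u : FreeMonoid (B × Bool)) : wInv (wInv u) = u := by
  simp [wInv, List.map_reverse, Function.comp_def]

theorem wInv_map (f : C → B) (u : FreeMonoid (C × Bool)) :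
    wInv (FreeMonoid.map (Prod.map f id) u) = FreeMonoid.map (Prod.map f id) (wInv u) := by
  induction u using FreeMonoid.inductionOn' with
  | one => rfl
  | of_mul l u ih => simp [ih]

end wInv

section Vagner

variable {B M : Type*} [Monoid M] {π : FreeMonoid (B × Bool) →* M}
  {x y v : FreeMonoid (B × Bool)}

/-- A homomorphism satisfies the Vagner relations, that is, it factors through the free inverse
monoid. -/
def IsVagner (π : FreeMonoid (B × Bool) →* M) : Prop :=
  ∀ ⦃x y⦄, vagnerRel B x y → π x = π y

theorem IsVagner.mul_wInv_mul (h : IsVagner π) (w : FreeMonoid (B × Bool)) :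
    π w * π (wInv w) * π w = π w := by
  simpa using h (.inl ⟨w, rfl, rfl⟩)

theorem IsVagner.commute (h : IsVagner π) (u w : FreeMonoid (B × Bool)) :
    Commute (π (w * wInv w)) (π (u * wInv u)) := by
  simpa [Commute, SemiconjBy] using h (.inr ⟨u, w, rfl, rfl⟩)

/-- A word is right invertible if the idempotent `w w⁻¹` maps to `1`. -/
def RightInvertible (π : FreeMonoid (B × Bool) →* M) (w : FreeMonoid (B × Bool)) : Prop :=
  π (w * wInv w) = 1

namespace RightInvertible

theorem mul (hx : RightInvertible π x) (hy : RightInvertible π y) :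
    RightInvertible π (x * y) := by
  simp only [RightInvertible, wInv_mul, map_mul] at *
  rw [← mul_assoc, mul_assoc (π x), hy, mul_one, hx]

theorem of_mul (h : IsVagner π) (hxy : RightInvertible π (x * y)) : RightInvertible π x := by
  simp only [RightInvertible, wInv_mul, map_mul, mul_assoc] at *
  calc π x * π (wInv x)
      = π x * π (wInv x) * π x * (π y * (π (wInv y) * π (wInv x))) := by
        simp only [mul_assoc, hxy, mul_one]
    _ = 1 := by rw [h.mul_wInv_mul, hxy]

/-- With `e = v⁻¹ v`, right invertibility of `x v⁻¹` and of `x` says that `x e x⁻¹ = x x⁻¹ = 1`.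
As `e` commutes with `x⁻¹ x`, this gives `x e = x` and `e x⁻¹ = x⁻¹`. -/
theorem cancel (h : IsVagner π) (hxy : RightInvertible π (x * wInv v * (v * y))) :
    RightInvertible π (x * y) := by
  have hxv : RightInvertible π (x * wInv v) := hxy.of_mul h
  have hx : RightInvertible π x := hxv.of_mul h
  have hcomm := (h.commute (wInv x) (wInv v)).eq
  simp only [RightInvertible, wInv_mul, wInv_wInv, map_mul, mul_assoc] at hxy hxv hx hcomm ⊢
  have hxe : π x * (π (wInv v) * π v) = π x := by
    calc π x * (π (wInv v) * π v)
        = π x * (π (wInv x) * (π x * (π (wInv v) * π v))) := by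
          rw [← mul_assoc (π x) (π (wInv x)), hx, one_mul]
      _ = π x * (π (wInv v) * (π v * π (wInv x))) * π x := by rw [← hcomm]; simp only [mul_assoc]
      _ = π x := by rw [hxv, one_mul]
  have hex : π (wInv v) * π v * π (wInv x) = π (wInv x) := by
    calc π (wInv v) * π v * π (wInv x)
        = π (wInv v) * (π v * (π (wInv x) * π x)) * π (wInv x) := by
          simp only [mul_assoc, hx, mul_one]
      _ = π (wInv x) * (π x * (π (wInv v) * (π v * π (wInv x)))) := by
        rw [hcomm]; simp only [mul_assoc]
      _ = π (wInv x) := by rw [hxv, mul_one]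
  calc π x * (π y * (π (wInv y) * π (wInv x)))
      = π x * (π (wInv v) * π v) * (π y * (π (wInv y) * (π (wInv v) * π v * π (wInv x)))) := by
        rw [hxe, hex]
    _ = 1 := by simpa only [mul_assoc] using hxy

end RightInvertible

theorem IsVagner.map_mul_wInv_mul_eq_one_iff (h : IsVagner π) :
    π (x * wInv x * y) = 1 ↔ RightInvertible π x ∧ π y = 1 := by
  constructor
  · intro hxy
    have hx : RightInvertible π x := by
      calc π (x * wInv x) = π x * π (wInv x) * π (x * wInv x * y) := by rw [hxy, mul_one, map_mul]
        _ = π x * π (wInv x) * π x * π (wInv x) * π y := by simp only [map_mul, mul_assoc]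
        _ = 1 := by rw [h.mul_wInv_mul, ← map_mul, ← map_mul, hxy]
    exact ⟨hx, by rwa [map_mul, hx, one_mul] at hxy⟩
  · rintro ⟨hx, hy⟩
    rw [map_mul, hx, hy, one_mul]

theorem IsVagner.map_prod_mul_eq_one_iff (h : IsVagner π) (L : List (FreeMonoid (B × Bool))) :
    π ((L.map fun x => x * wInv x).prod * y) = 1 ↔ (∀ x ∈ L, RightInvertible π x) ∧ π y = 1 := by
  induction L with
  | nil => simp
  | cons x L ih =>
    rw [List.map_cons, List.prod_cons, mul_assoc, h.map_mul_wInv_mul_eq_one_iff, ih,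
      List.forall_mem_cons, and_assoc]

/-- The homomorphism to the units that is defined by `π` if all letters are right invertible. -/
def unitHom (π : FreeMonoid (B × Bool) →* M) (h : ∀ l, RightInvertible π (FreeMonoid.of l)) :
    FreeMonoid (B × Bool) →* Mˣ :=
  FreeMonoid.lift fun l =>
    { val := π (FreeMonoid.of l)
      inv := π (FreeMonoid.of (l.1, !l.2))
      val_inv := by simpa [RightInvertible] using h l
      inv_val := by simpa [RightInvertible] using h (l.1, !l.2) }

section unitHom

variable (h : ∀ l, RightInvertible π (FreeMonoid.of l))

theorem coe_unitHom (u : FreeMonoid (B × Bool)) : (unitHom π h u : M) = π u := by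
  induction u using FreeMonoid.inductionOn' with
  | one => simp
  | of_mul l u ih => rw [map_mul, Units.val_mul, ih, map_mul]; simp [unitHom]

theorem unitHom_wInv (u : FreeMonoid (B × Bool)) : unitHom π h (wInv u) = (unitHom π h u)⁻¹ := by
  induction u using FreeMonoid.inductionOn' with
  | one => simp
  | of_mul l u ih =>
    have hl : unitHom π h (FreeMonoid.of (l.1, !l.2)) = (unitHom π h (FreeMonoid.of l))⁻¹ :=
      Units.ext (by simp [unitHom])
    simp [ih, hl]

end unitHom

end Vagner

theorem oneRelatorInvCon_isVagner {n : ℕ} (w : FreeMonoid (Fin n × Bool)) :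
    IsVagner (oneRelatorInvCon w).mk' :=
  fun _ _ h => (Con.eq _).2 (.of _ _ (.inl h))

theorem oneRelatorInvCon_self {n : ℕ} (w : FreeMonoid (Fin n × Bool)) :
    (oneRelatorInvCon w).mk' w = 1 :=
  (Con.eq _).2 (.of _ _ (.inr ⟨rfl, rfl⟩))

theorem IsVagner.map_eq_of_oneRelatorInvCon {n : ℕ} {w u v : FreeMonoid (Fin n × Bool)}
    {M : Type*} [Monoid M] {π : FreeMonoid (Fin n × Bool) →* M} (h : IsVagner π) (hw : π w = 1)
    (huv : oneRelatorInvCon w u v) : π u = π v := by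
  suffices oneRelatorInvCon w ≤ Con.ker π from (Con.ker_rel π).1 (this huv)
  refine Con.conGen_le.2 ?_
  rintro x y (hxy | ⟨rfl, rfl⟩)
  · exact h hxy
  · exact hw.trans π.map_one.symm

/-! ### The inverse monoid of a labelled graph -/

section Presentation

variable {B C V E M : Type*} [Monoid M] (ι : C ⊕ V ≃ B)

/-- The inclusion of the words over the generators `C` of a group. -/
def groupWord : FreeMonoid (C × Bool) →* FreeMonoid (B × Bool) :=
  FreeMonoid.map (Prod.map (ι ∘ Sum.inl) id)

/-- The word `p u q⁻¹`, in which `p` and `q` are the letters attached to two vertices. -/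
def edgeWord (p : V) (u : FreeMonoid (C × Bool)) (q : V) : FreeMonoid (B × Bool) :=
  FreeMonoid.of (ι (.inr p), true) * groupWord ι u * FreeMonoid.of (ι (.inr q), false)

theorem wInv_groupWord (u : FreeMonoid (C × Bool)) :
    wInv (groupWord ι u) = groupWord ι (wInv u) :=
  wInv_map _ u

variable (G : LabelledGraph V E (FreeMonoid (C × Bool))) (r : FreeMonoid (C × Bool))

/-- The relator `∏ w w⁻¹ · r`, in which `w` runs through the letters of the group and through the
words `p u q⁻¹` of the edges of `G`. -/
noncomputable def relator [Fintype C] [Fintype E] : FreeMonoid (B × Bool) :=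
  (((Finset.univ.toList.map fun l : C × Bool => groupWord ι (.of l)) ++
    (Finset.univ.toList.map fun e : E => edgeWord ι (G.src e) (G.label e) (G.tgt e))).map
      fun w => w * wInv w).prod * groupWord ι r

/-- The homomorphisms to inverse monoids that identify the relator with `1`: they turn the group
letters into units satisfying the group relation and the words of the edges into right invertible
elements. -/
structure IsModel (π : FreeMonoid (B × Bool) →* M) : Prop where
  isVagner : IsVagner π
  rightInvertible_letter (l : C × Bool) : RightInvertible π (groupWord ι (.of l))
  rightInvertible_edge (e : E) :
    RightInvertible π (edgeWord ι (G.src e) (G.label e) (G.tgt e))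
  map_groupWord : π (groupWord ι r) = 1

variable {ι G r} {π : FreeMonoid (B × Bool) →* M}

theorem isModel_iff [Fintype C] [Fintype E] :
    IsModel ι G r π ↔ IsVagner π ∧ π (relator ι G r) = 1 := by
  constructor
  · rintro ⟨h, hletter, hedge, hr⟩
    refine ⟨h, (h.map_prod_mul_eq_one_iff _).2 ⟨?_, hr⟩⟩
    simp only [List.mem_append, List.mem_map, Finset.mem_toList, Finset.mem_univ, true_and]
    rintro _ (⟨l, rfl⟩ | ⟨e, rfl⟩)
    exacts [hletter l, hedge e]
  · rintro ⟨h, hπ⟩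
    obtain ⟨hw, hr⟩ := (h.map_prod_mul_eq_one_iff _).1 hπ
    simp only [List.mem_append, List.mem_map, Finset.mem_toList, Finset.mem_univ, true_and] at hw
    exact ⟨h, fun l => hw _ (.inl ⟨l, rfl⟩), fun e => hw _ (.inr ⟨e, rfl⟩), hr⟩

namespace IsModel

variable {p q s : V} {u v : FreeMonoid (C × Bool)}

/-- The group homomorphism to the units that is induced by a model. -/
def unitHom (h : IsModel ι G r π) : FreeMonoid (C × Bool) →* Mˣ :=
  _root_.unitHom (π.comp (groupWord ι)) fun l => by
    simpa [RightInvertible, wInv_groupWord] using h.rightInvertible_letter l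

variable (h : IsModel ι G r π)

theorem coe_unitHom (u : FreeMonoid (C × Bool)) : (h.unitHom u : M) = π (groupWord ι u) :=
  _root_.coe_unitHom _ u

theorem unitHom_wInv (u : FreeMonoid (C × Bool)) : h.unitHom (wInv u) = (h.unitHom u)⁻¹ :=
  _root_.unitHom_wInv _ u

theorem unitHom_relation : h.unitHom r = 1 :=
  Units.ext (by simpa [coe_unitHom] using h.map_groupWord)

theorem edgeWord_congr (huv : h.unitHom u = h.unitHom v)
    (hu : RightInvertible π (edgeWord ι p u q)) : RightInvertible π (edgeWord ι p v q) := by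
  have hinv : h.unitHom (wInv u) = h.unitHom (wInv v) := by rw [unitHom_wInv, unitHom_wInv, huv]
  simpa [RightInvertible, wInv_groupWord, edgeWord, ← h.coe_unitHom, huv, hinv] using hu

include h in
theorem edgeWord_mul (hu : RightInvertible π (edgeWord ι p u q))
    (hv : RightInvertible π (edgeWord ι q v s)) : RightInvertible π (edgeWord ι p (u * v) s) := by
  have huv := hu.mul hv
  simp only [edgeWord, map_mul, mul_assoc] at huv ⊢
  rw [← mul_assoc]
  refine RightInvertible.cancel h.isVagner (v := FreeMonoid.of (ι (.inr q), true)) ?_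
  simpa [mul_assoc] using huv

end IsModel

theorem isModel_mk' {n : ℕ} [Fintype C] [Fintype E] (ι : C ⊕ V ≃ Fin n)
    (G : LabelledGraph V E (FreeMonoid (C × Bool))) (r : FreeMonoid (C × Bool)) :
    IsModel ι G r (oneRelatorInvCon (relator ι G r)).mk' :=
  isModel_iff.2 ⟨oneRelatorInvCon_isVagner _, oneRelatorInvCon_self _⟩

theorem IsModel.rightInvertible_of_con {n : ℕ} [Fintype C] [Fintype E] {ι : C ⊕ V ≃ Fin n}
    {π : FreeMonoid (Fin n × Bool) →* M} (h : IsModel ι G r π) {w : FreeMonoid (Fin n × Bool)}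
    (hw : RightInvertible (oneRelatorInvCon (relator ι G r)).mk' w) : RightInvertible π w := by
  have hcon : oneRelatorInvCon (relator ι G r) (w * wInv w) 1 := (Con.eq _).1 hw
  exact (h.isVagner.map_eq_of_oneRelatorInvCon (isModel_iff.1 h).2 hcon).trans π.map_one

end Presentation

/-! ### Models by partial bijections -/

/-- Composition is from left to right. -/
instance {X : Type*} : Monoid (X ≃. X) where
  mul f g := f.trans g
  one := PEquiv.refl X
  mul_assoc := PEquiv.trans_assoc
  one_mul := PEquiv.refl_trans
  mul_one := PEquiv.trans_refl

section PEquiv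

variable {B C V E X : Type*}

theorem pequiv_mul_eq_some_iff {f g : X ≃. X} {a c : X} :
    (f * g) a = some c ↔ ∃ b, f a = some b ∧ g b = some c :=
  PEquiv.trans_eq_some f g a c

/-- The homomorphism that sends the letters of an alphabet to partial bijections. -/
def pequivHom (f : B → (X ≃. X)) : FreeMonoid (B × Bool) →* (X ≃. X) :=
  FreeMonoid.lift fun l => bif l.2 then f l.1 else (f l.1).symm

theorem pequivHom_wInv (f : B → (X ≃. X)) (w : FreeMonoid (B × Bool)) :
    pequivHom f (wInv w) = (pequivHom f w).symm := by
  induction w using FreeMonoid.inductionOn' with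
  | one => rfl
  | of_mul l u ih =>
    have hl : pequivHom f (wInv (.of l)) = (pequivHom f (.of l)).symm := by
      obtain ⟨c, _ | _⟩ := l <;> simp [pequivHom]
    rw [wInv_mul, map_mul, map_mul, ih, hl]
    rfl

theorem isVagner_pequivHom (f : B → (X ≃. X)) : IsVagner (pequivHom f) := by
  have hself (w : FreeMonoid (B × Bool)) (a b : X) :
      pequivHom f (w * wInv w) a = some b ↔ b = a ∧ (pequivHom f w a).isSome := by
    rw [map_mul, pequivHom_wInv]
    change (pequivHom f w).trans (pequivHom f w).symm a = some b ↔ _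
    rw [PEquiv.self_trans_symm, PEquiv.ofSet_eq_some_iff]
    grind
  rintro x y (⟨w, rfl, rfl⟩ | ⟨u, w, rfl, rfl⟩) <;> ext a b
  · simp only [map_mul _ (_ * _), pequiv_mul_eq_some_iff, hself]
    grind
  · simp only [map_mul _ (_ * wInv _), pequiv_mul_eq_some_iff, hself]
    grind

theorem rightInvertible_pequivHom_iff {f : B → (X ≃. X)} {w : FreeMonoid (B × Bool)} :
    RightInvertible (pequivHom f) w ↔ ∀ x, (pequivHom f w x).isSome := by
  rw [RightInvertible, map_mul, pequivHom_wInv]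
  exact PEquiv.trans_symm_eq_iff_forall_isSome

/-- An embedding as a partial bijection. -/
noncomputable def embeddingPEquiv (j : X ↪ X) : X ≃. X where
  toFun x := some (j x)
  invFun := Function.partialInv j
  inv x y := by
    simpa [eq_comm] using Function.Injective.isPartialInv j.injective x y

theorem embeddingPEquiv_apply (j : X ↪ X) (x : X) : embeddingPEquiv j x = some (j x) := rfl

/-- The image of a point under a word in permutations, read from left to right. -/
def wordAction (p : C → Equiv.Perm X) (u : FreeMonoid (C × Bool)) (x : X) : X :=
  u.toList.foldl (fun y l => bif l.2 then p l.1 y else (p l.1).symm y) x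

section wordAction

variable (p : C → Equiv.Perm X)

@[simp]
theorem wordAction_one (x : X) : wordAction p 1 x = x := rfl

@[simp]
theorem wordAction_mul (u v : FreeMonoid (C × Bool)) (x : X) :
    wordAction p (u * v) x = wordAction p v (wordAction p u x) := by
  simp [wordAction]

@[simp]
theorem wordAction_of (l : C × Bool) (x : X) :
    wordAction p (.of l) x = bif l.2 then p l.1 x else (p l.1).symm x := rfl

end wordAction

/-- The homomorphism to partial bijections that is given by permutations for the group letters and
by embeddings for the vertices. -/
noncomputable def embeddingModel (ι : C ⊕ V ≃ B) (p : C → Equiv.Perm X) (j : V → X ↪ X) :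
    FreeMonoid (B × Bool) →* (X ≃. X) :=
  pequivHom (Sum.elim (fun c => (p c).toPEquiv) (fun v => embeddingPEquiv (j v)) ∘ ι.symm)

section embeddingModel

variable (ι : C ⊕ V ≃ B) (p : C → Equiv.Perm X) (j : V → X ↪ X)
  {G : LabelledGraph V E (FreeMonoid (C × Bool))} {r : FreeMonoid (C × Bool)}

theorem embeddingModel_groupWord (u : FreeMonoid (C × Bool)) (x : X) :
    embeddingModel ι p j (groupWord ι u) x = some (wordAction p u x) := by
  induction u using FreeMonoid.inductionOn' generalizing x with
  | one => rfl
  | of_mul l u ih =>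
    have hl : embeddingModel ι p j (groupWord ι (.of l)) x = some (wordAction p (.of l) x) := by
      obtain ⟨c, _ | _⟩ := l <;>
        simp [embeddingModel, pequivHom, groupWord, ← Equiv.toPEquiv_symm]
    rw [map_mul, map_mul, wordAction_mul, ← ih]
    exact (congrArg (Option.bind · _) hl).trans (Option.bind_some _ _)

theorem rightInvertible_edgeWord_iff {v w : V} {u : FreeMonoid (C × Bool)} :
    RightInvertible (embeddingModel ι p j) (edgeWord ι v u w) ↔
      Set.MapsTo (wordAction p u) (Set.range (j v)) (Set.range (j w)) := by
  have hedge (x z : X) : embeddingModel ι p j (edgeWord ι v u w) x = some z ↔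
      j w z = wordAction p u (j v x) := by
    have hv : embeddingModel ι p j (.of (ι (.inr v), true)) x = some (j v x) := by
      simp [embeddingModel, pequivHom, embeddingPEquiv_apply]
    have hw (y : X) : embeddingModel ι p j (.of (ι (.inr w), false)) y = some z ↔ j w z = y := by
      suffices (embeddingPEquiv (j w)).symm y = some z ↔ j w z = y by
        simpa [embeddingModel, pequivHom] using this
      rw [PEquiv.eq_some_iff, embeddingPEquiv_apply, Option.some_inj]
    simp [edgeWord, pequiv_mul_eq_some_iff, embeddingModel_groupWord, hv, hw]
  simp only [embeddingModel, rightInvertible_pequivHom_iff, Option.isSome_iff_exists,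
    Set.mapsTo_range_iff, Set.mem_range] at hedge ⊢
  exact forall_congr' fun x => exists_congr fun z => hedge x z

theorem isModel_embeddingModel (hr : ∀ x, wordAction p r x = x)
    (hG : ∀ e, Set.MapsTo (wordAction p (G.label e)) (Set.range (j (G.src e)))
      (Set.range (j (G.tgt e)))) :
    IsModel ι G r (embeddingModel ι p j) where
  isVagner := isVagner_pequivHom _
  rightInvertible_letter l :=
    rightInvertible_pequivHom_iff.2 fun x => by
      exact (congrArg _ (embeddingModel_groupWord ι p j _ x)).trans rfl
  rightInvertible_edge e := (rightInvertible_edgeWord_iff ι p j).2 (hG e)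
  map_groupWord := PEquiv.ext fun x => by rw [embeddingModel_groupWord, hr]; rfl

end embeddingModel

theorem exists_embedding_range_eq [Countable X] {s : Set X} (hs : s.Infinite) :
    ∃ j : X ↪ X, Set.range j = s := by
  have : Infinite s := hs.to_subtype
  have : Infinite X := .of_injective _ (Subtype.val_injective (p := (· ∈ s)))
  obtain ⟨e⟩ := nonempty_equiv_of_countable (α := X) (β := s)
  exact ⟨e.toEmbedding.trans (.subtype _), (e.surjective.range_comp _).trans Subtype.range_coe⟩

theorem mapsTo_of_rightInvertible_mk' [Fintype C] [Fintype E] [Countable X] {n : ℕ}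
    {ι : C ⊕ V ≃ Fin n} {G : LabelledGraph V E (FreeMonoid (C × Bool))}
    {r : FreeMonoid (C × Bool)} {p : C → Equiv.Perm X} (hr : ∀ x, wordAction p r x = x)
    {Y : V → Set X} (hY : ∀ v, (Y v).Infinite)
    (hG : ∀ e, Set.MapsTo (wordAction p (G.label e)) (Y (G.src e)) (Y (G.tgt e)))
    {v w : V} {u : FreeMonoid (C × Bool)}
    (h : RightInvertible (oneRelatorInvCon (relator ι G r)).mk' (edgeWord ι v u w)) :
    Set.MapsTo (wordAction p u) (Y v) (Y w) := by
  choose j hj using fun v => exists_embedding_range_eq (hY v)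
  obtain rfl : (fun v => Set.range (j v)) = Y := funext hj
  exact (rightInvertible_edgeWord_iff ι p j).1
    ((isModel_embeddingModel ι p j hr hG).rightInvertible_of_con h)

end PEquiv

/-! ### The group `⟨a, t | [a, t a t⁻¹] = 1⟩` -/

theorem inv_pow_mul_pow_mul_eq {H : Type*} [Group H] {a t : H} (h : Commute a (t * a * t⁻¹))
    (l : AffineLabel) (k : ℕ) :
    a⁻¹ ^ l.β * (a⁻¹ ^ l.α * (t * a * t⁻¹) ^ l.γ) ^ k * ((t * a * t⁻¹) ^ l.δ * t) =
      a⁻¹ ^ (l.α * k + l.β) * t * a ^ (l.γ * k + l.δ) := by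
  rw [(h.inv_left.pow_pow l.α l.γ).mul_pow k, ← pow_mul, ← pow_mul]
  calc _ = a⁻¹ ^ l.β * a⁻¹ ^ (l.α * k) *
          ((t * a * t⁻¹) ^ (l.γ * k) * (t * a * t⁻¹) ^ l.δ) * t := by simp only [mul_assoc]
    _ = a⁻¹ ^ (l.α * k + l.β) * t * a ^ (l.γ * k + l.δ) := by
      rw [← pow_add, ← pow_add, conj_pow, add_comm]
      simp only [mul_assoc, inv_mul_cancel, mul_one]

/-- The generators of the group. -/
inductive Generator
  | base
  | stable
  deriving DecidableEq

instance : Fintype Generator :=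
  ⟨{.base, .stable}, fun c => by cases c <;> simp⟩

/-- The generator `a`. -/
def wordA : FreeMonoid (Generator × Bool) := .of (.base, true)

/-- The generator `t`. -/
def wordT : FreeMonoid (Generator × Bool) := .of (.stable, true)

/-- The conjugate `b = t a t⁻¹`. -/
def wordB : FreeMonoid (Generator × Bool) := wordT * wordA * wInv wordT

/-- The relator `[a, b]` of the group. -/
def commutatorWord : FreeMonoid (Generator × Bool) := wordA * wordB * wInv wordA * wInv wordB

/-- The vertices of the graph that simulates an affine automaton. -/
inductive SimVertex (V E : Type*)
  | state (v : V)
  | loop (e : E)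
  | sink
  deriving Fintype

/-- The edges of the graph that simulates an affine automaton. -/
inductive SimEdge (E : Type*)
  | enter (e : E)
  | iterate (e : E)
  | exit (e : E)
  | accept
  | clean
  deriving Fintype

/-- The graph that simulates runs of an affine automaton `A` ending in the state `f`. A counter
value `x` is represented by `a⁻ˣ`: for an edge of `A` the words `a⁻ᵝ`, `(a⁻ᵅ bᵞ)ᵏ` and `bᵟ t`
multiply to `a⁻⁽ᵅᵏ⁺ᵝ⁾ t aᵞᵏ⁺ᵟ`. -/
@[simps]
def simGraph {V E : Type*} (A : LabelledGraph V E AffineLabel) (f : V) :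
    LabelledGraph (SimVertex V E) (SimEdge E) (FreeMonoid (Generator × Bool)) where
  src
    | .enter e => .state (A.src e)
    | .iterate e => .loop e
    | .exit e => .loop e
    | .accept => .state f
    | .clean => .sink
  label
    | .enter e => wInv wordA ^ (A.label e).β
    | .iterate e => wInv wordA ^ (A.label e).α * wordB ^ (A.label e).γ
    | .exit e => wordB ^ (A.label e).δ * wordT
    | .accept => 1
    | .clean => wInv wordT
  tgt
    | .enter e => .loop e
    | .iterate e => .loop e
    | .exit e => .state (A.tgt e)
    | .accept => .sink
    | .clean => .sink

section Completeness

variable {V E B M : Type*} [Monoid M] {A : LabelledGraph V E AffineLabel} {f : V}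
  {ι : Generator ⊕ SimVertex V E ≃ B} {π : FreeMonoid (B × Bool) →* M}

namespace IsModel

variable (h : IsModel ι (simGraph A f) commutatorWord π)

theorem unitHom_wordB :
    h.unitHom wordB = h.unitHom wordT * h.unitHom wordA * (h.unitHom wordT)⁻¹ := by
  simp [wordB, unitHom_wInv]

theorem commute_unitHom_wordA :
    Commute (h.unitHom wordA)
      (h.unitHom wordT * h.unitHom wordA * (h.unitHom wordT)⁻¹) := by
  rw [← h.unitHom_wordB]
  refine commutatorElement_eq_one_iff_commute.1 ?_
  simpa [commutatorWord, commutatorElement_def, unitHom_wInv] using h.unitHom_relation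

include h

theorem edgeWord_iterate (e : E) (k : ℕ) :
    RightInvertible π (edgeWord ι (.state (A.src e)) (wInv wordA ^ (A.label e).β *
      (wInv wordA ^ (A.label e).α * wordB ^ (A.label e).γ) ^ k) (.loop e)) := by
  induction k with
  | zero => simpa using h.rightInvertible_edge (.enter e)
  | succ k ih =>
    rw [pow_succ, ← mul_assoc]
    exact h.edgeWord_mul ih (h.rightInvertible_edge (.iterate e))

theorem edgeWord_of_rel {e : E} {x y : ℕ} (hxy : (A.label e).Rel x y) :
    RightInvertible π (edgeWord ι (.state (A.src e)) (wInv wordA ^ x * wordT * wordA ^ y)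
      (.state (A.tgt e))) := by
  obtain ⟨k, rfl, rfl⟩ := hxy
  refine h.edgeWord_congr ?_
    (h.edgeWord_mul (h.edgeWord_iterate e k) (h.rightInvertible_edge (.exit e)))
  simp only [simGraph_label, map_mul, map_pow, unitHom_wInv, unitHom_wordB]
  exact inv_pow_mul_pow_mul_eq h.commute_unitHom_wordA (A.label e) k

theorem exists_edgeWord_of_connects {q : V} {x : ℕ}
    (hx : A.Connects AffineLabel.Rel q f x 0) :
    ∃ N, RightInvertible π (edgeWord ι (.state q) (wInv wordA ^ x * wordT ^ N) .sink) := by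
  suffices ∀ c : V × ℕ, Relation.ReflTransGen (A.Step AffineLabel.Rel) c (f, 0) → ∃ N,
      RightInvertible π (edgeWord ι (.state c.1) (wInv wordA ^ c.2 * wordT ^ N) .sink) from
    this (q, x) hx
  intro c hc
  induction hc using Relation.ReflTransGen.head_induction_on with
  | refl => exact ⟨0, by simpa using h.rightInvertible_edge .accept⟩
  | @head c d hcd _ ih =>
    obtain ⟨e, hsrc, htgt, hrel⟩ := hcd
    obtain ⟨N, hN⟩ := ih
    rw [← htgt] at hN
    rw [← hsrc]
    refine ⟨N + 1, h.edgeWord_congr ?_ (h.edgeWord_mul (h.edgeWord_of_rel hrel) hN)⟩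
    simp [unitHom_wInv, pow_succ', mul_assoc]

theorem edgeWord_of_connects {q : V} {x : ℕ} (hx : A.Connects AffineLabel.Rel q f x 0) :
    RightInvertible π (edgeWord ι (.state q) (wInv wordA ^ x) .sink) := by
  obtain ⟨N, hN⟩ := h.exists_edgeWord_of_connects hx
  induction N with
  | zero => simpa using hN
  | succ N ih =>
    refine ih (h.edgeWord_congr ?_ (h.edgeWord_mul hN (h.rightInvertible_edge .clean)))
    simp [unitHom_wInv, pow_succ, mul_assoc]

end IsModel

end Completeness

/-! ### The lamplighter action -/

/-- A configuration of the lamplighter: the brightness of every lamp and the position of the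
lamplighter. -/
abbrev LampConfig := (ℤ →₀ ℤ) × ℤ

section Lamplighter

open Finsupp Set

/-- The generator `a` increases the brightness at the position of the lamplighter, and `t` moves
the lamplighter to the right. -/
noncomputable def lampPerm : Generator → Equiv.Perm LampConfig
  | .base =>
    { toFun := fun w => (w.1 + single w.2 1, w.2)
      invFun := fun w => (w.1 - single w.2 1, w.2)
      left_inv := fun w => by simp
      right_inv := fun w => by simp }
  | .stable => (Equiv.refl _).prodCongr (Equiv.addRight 1)

variable (g : ℤ →₀ ℤ) (m : ℤ) (n : ℕ)

theorem lampPerm_wInv_wordA :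
    wordAction lampPerm (wInv wordA) (g, m) = (g - single m 1, m) := rfl

theorem lampPerm_wordT : wordAction lampPerm wordT (g, m) = (g, m + 1) := rfl

theorem lampPerm_wordB :
    wordAction lampPerm wordB (g, m) = (g + single (m + 1) 1, m) := by
  simp [wordB, wordT, wordA, lampPerm]

theorem lampPerm_commutatorWord (w : LampConfig) :
    wordAction lampPerm commutatorWord w = w := by
  ext <;> simp [commutatorWord, wordB, wordT, wordA, lampPerm]
  ring

theorem lampPerm_wInv_wordA_pow :
    wordAction lampPerm (wInv wordA ^ n) (g, m) = (g - single m (n : ℤ), m) := by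
  induction n with
  | zero => simp
  | succ n ih =>
    rw [pow_succ, wordAction_mul, ih, lampPerm_wInv_wordA, Nat.cast_succ, single_add, sub_sub]

theorem lampPerm_wordB_pow :
    wordAction lampPerm (wordB ^ n) (g, m) = (g + single (m + 1) (n : ℤ), m) := by
  induction n with
  | zero => simp
  | succ n ih =>
    rw [pow_succ, wordAction_mul, ih, lampPerm_wordB, Nat.cast_succ, single_add, add_assoc]

/-- The configurations with a lamp that is on to the left of the lamplighter. The words of
`simGraph` between states and loops cannot switch it off. -/
def dirty : Set LampConfig := {w | ∃ j < w.2, w.1 j ≠ 0}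

variable {g m n}

theorem mem_dirty_of_le {g' : ℤ →₀ ℤ} {m' : ℤ} (hg : (g, m) ∈ dirty) (hm : m ≤ m')
    (hg' : ∀ j < m, g' j = g j) : (g', m') ∈ dirty := by
  obtain ⟨j, hj, hne⟩ := hg
  exact ⟨j, hj.trans_le hm, (hg' j hj).trans_ne hne⟩

theorem infinite_dirty : dirty.Infinite := by
  refine infinite_of_injective_forall_mem (f := fun n : ℕ => ((single 0 1, n + 1) : LampConfig))
    (fun n n' h => by simpa using h) fun n => ⟨0, ?_, ?_⟩
  · positivity
  · simp

theorem mapsTo_dirty_ne_zero : MapsTo id dirty {w : LampConfig | w.1 ≠ 0} := by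
  rintro ⟨_, m⟩ ⟨j, -, hj⟩ rfl
  exact hj rfl

variable {V E : Type*} (A : LabelledGraph V E AffineLabel) (i : V) (x : ℕ)

/-- The clean configurations that can be reached at a vertex of `simGraph` if the automaton starts
in the state `i` with the counter value `x`. At a loop, `k` counts the iterations. -/
def cleanConfigs : SimVertex V E → Set LampConfig
  | .state q => {w | ∃ y : ℕ, A.Connects AffineLabel.Rel i q x y ∧ w.1 = single w.2 (y : ℤ)}
  | .loop e => {w | ∃ y k : ℕ, A.Connects AffineLabel.Rel i (A.src e) x y ∧
      w.1 = single w.2 ((y : ℤ) - (A.label e).β - (A.label e).α * k) +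
        single (w.2 + 1) ((A.label e).γ * k : ℤ)}
  | .sink => {w | w.1 ≠ 0}

/-- The configurations that are allowed at the vertices of `simGraph`. -/
def lampSet (v : SimVertex V E) : Set LampConfig := cleanConfigs A i x v ∪ dirty

variable {A i x}

theorem mapsTo_lampSet_enter (e : E) :
    MapsTo (wordAction lampPerm (wInv wordA ^ (A.label e).β)) (lampSet A i x (.state (A.src e)))
      (lampSet A i x (.loop e)) := by
  rintro ⟨g, m⟩ hw
  rw [lampPerm_wInv_wordA_pow]
  obtain ⟨y, hy, hg⟩ | hd := hw
  · obtain rfl : g = single m (y : ℤ) := hg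
    exact .inl ⟨y, 0, hy, by simp⟩
  · refine .inr (mem_dirty_of_le hd le_rfl fun j hj => ?_)
    simp [hj.ne']

theorem mapsTo_lampSet_iterate (e : E) :
    MapsTo (wordAction lampPerm (wInv wordA ^ (A.label e).α * wordB ^ (A.label e).γ))
      (lampSet A i x (.loop e)) (lampSet A i x (.loop e)) := by
  rintro ⟨g, m⟩ hw
  rw [wordAction_mul, lampPerm_wInv_wordA_pow, lampPerm_wordB_pow]
  obtain ⟨y, k, hy, hg⟩ | hd := hw
  · refine .inl ⟨y, k + 1, hy, ?_⟩
    simp only at hg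
    simp only [hg, Nat.cast_succ, mul_add, mul_one, single_sub, single_add]
    abel
  · refine .inr (mem_dirty_of_le hd le_rfl fun j hj => ?_)
    have hmj : m ≠ j := hj.ne'
    have hmj' : m + 1 ≠ j := by omega
    simp [hmj', hmj]

/-- If the division of the counter value is not exact, then a lamp stays on at the old position
of the lamplighter. -/
theorem mapsTo_lampSet_exit (e : E) :
    MapsTo (wordAction lampPerm (wordB ^ (A.label e).δ * wordT)) (lampSet A i x (.loop e))
      (lampSet A i x (.state (A.tgt e))) := by
  rintro ⟨g, m⟩ (⟨y, k, hy, hg⟩ | hd) <;> rw [wordAction_mul, lampPerm_wordB_pow, lampPerm_wordT]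
  · simp only at hg
    by_cases hk : (y : ℤ) - (A.label e).β - (A.label e).α * k = 0
    · refine .inl ⟨(A.label e).γ * k + (A.label e).δ, hy.step ⟨k, by zify; linarith, rfl⟩, ?_⟩
      simp [hg, hk, single_add]
    · exact .inr ⟨m, lt_add_one m, by simpa [hg, single_apply] using hk⟩
  · refine .inr (mem_dirty_of_le hd (by omega) fun j hj => ?_)
    have hm' : m + 1 ≠ j := by omega
    simp [hm']

theorem lampSet_sink : lampSet A i x .sink = {w | w.1 ≠ 0} :=
  union_eq_left.2 mapsTo_dirty_ne_zero

theorem mapsTo_lampSet_accept {f : V} (hf : ¬ A.Connects AffineLabel.Rel i f x 0) :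
    MapsTo (wordAction lampPerm 1) (lampSet A i x (.state f)) (lampSet A i x .sink) := by
  rintro ⟨g, m⟩ (⟨y, hy, hg⟩ | hd)
  · refine .inl fun hg0 => hf ?_
    obtain rfl : y = 0 := by simpa [hg] using hg0
    exact hy
  · exact .inr hd

theorem mapsTo_lampSet {f : V} (hf : ¬ A.Connects AffineLabel.Rel i f x 0) (e : SimEdge E) :
    MapsTo (wordAction lampPerm ((simGraph A f).label e)) (lampSet A i x ((simGraph A f).src e))
      (lampSet A i x ((simGraph A f).tgt e)) := by
  cases e with
  | enter e => exact mapsTo_lampSet_enter e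
  | iterate e => exact mapsTo_lampSet_iterate e
  | exit e => exact mapsTo_lampSet_exit e
  | accept => exact mapsTo_lampSet_accept hf
  | clean =>
    change MapsTo _ (lampSet A i x .sink) (lampSet A i x .sink)
    rw [lampSet_sink]
    exact fun w hw => hw

end Lamplighter

theorem rightInvertible_edgeWord_iff_connects {V E : Type*} [Fintype E]
    (A : LabelledGraph V E AffineLabel) (i f : V) {n : ℕ}
    (ι : Generator ⊕ SimVertex V E ≃ Fin n) (x : ℕ) :
    RightInvertible (oneRelatorInvCon (relator ι (simGraph A f) commutatorWord)).mk'
        (edgeWord ι (.state i) (wInv wordA ^ x) .sink) ↔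
      A.Connects AffineLabel.Rel i f x 0 := by
  refine ⟨fun h => ?_, (isModel_mk' ι (simGraph A f) commutatorWord).edgeWord_of_connects⟩
  by_contra hf
  have hmaps := mapsTo_of_rightInvertible_mk' (Y := lampSet A i x) lampPerm_commutatorWord
    (fun v => infinite_dirty.mono Set.subset_union_right) (mapsTo_lampSet hf) h
  have hsink := hmaps (x := (Finsupp.single 0 (x : ℤ), 0)) (.inl ⟨x, .refl, rfl⟩)
  rw [lampPerm_wInv_wordA_pow, sub_self, lampSet_sink] at hsink
  exact hsink rfl

/-! ### The reduction of the halting problem -/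

section Computability

theorem primrec_pow {M : Type*} [Monoid M] [Primcodable M]
    (hmul : Primrec₂ fun x y : M => x * y) (x : M) : Primrec fun n : ℕ => x ^ n := by
  refine (Primrec.nat_rec₁ 1 (hmul.comp .snd (.const x)).to₂).of_eq fun n => ?_
  induction n with
  | zero => exact (pow_zero x).symm
  | succ n ih => rw [pow_succ, ← ih]

theorem primrec_freeMonoid_mul {α : Type*} [Primcodable α] :
    Primrec₂ fun u v : FreeMonoid α => u * v := by
  have htoList : Primrec (FreeMonoid.toList (α := α)) := Primrec.of_equiv
  have hofList : Primrec (FreeMonoid.toList (α := α)).symm := Primrec.of_equiv_symm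
  exact hofList.comp (Primrec.list_append.comp (htoList.comp .fst) (htoList.comp .snd))

theorem primrec_edgeWord_pow_mul_wInv {C V : Type*} {n : ℕ} (ι : C ⊕ V ≃ Fin n) (p q : V)
    (u : FreeMonoid (C × Bool)) :
    Primrec fun x : ℕ => edgeWord ι p (u ^ x) q * wInv (edgeWord ι p (u ^ x) q) := by
  simp only [edgeWord, wInv_mul, wInv_groupWord, wInv_pow, map_pow]
  have hmul {g h : ℕ → FreeMonoid (Fin n × Bool)} (hg : Primrec g) (hh : Primrec h) :
      Primrec fun x => g x * h x := primrec_freeMonoid_mul.comp hg hh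
  exact hmul (hmul (hmul (.const _) (primrec_pow primrec_freeMonoid_mul _)) (.const _))
    (hmul (.const _) (hmul (primrec_pow primrec_freeMonoid_mul _) (.const _)))

theorem exists_primrec_dom_iff_exists_eq_zero :
    ∃ f : ℕ → ℕ → ℕ, Primrec₂ f ∧
      ∀ c : Nat.Partrec.Code, (c.eval 0).Dom ↔ ∃ k, f (Encodable.encode c) k = 0 := by
  let f (c k : ℕ) : ℕ :=
    if ((Denumerable.ofNat Nat.Partrec.Code c).evaln k 0).isSome = true then 0 else 1
  refine ⟨f, ?_, fun c => ?_⟩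
  · have heval : Primrec₂ fun c k : ℕ =>
        ((Denumerable.ofNat Nat.Partrec.Code c).evaln k 0).isSome :=
      Primrec.option_isSome.comp (Nat.Partrec.Code.primrec_evaln.comp
        (((Primrec.snd).pair ((Primrec.ofNat _).comp .fst)).pair (.const 0)))
    exact Primrec.ite (Primrec.eq.comp heval (.const true)) (.const 0) (.const 1)
  · simp only [Part.dom_iff_mem, Nat.Partrec.Code.evaln_complete, f, Denumerable.ofNat_encode]
    rw [exists_comm]
    simp [Option.isSome_iff_exists]

end Computability

/-- There is a one-relator inverse monoid `Inv⟨A | w = 1⟩` with undecidable word problem. -/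
theorem exists_oneRelator_invMonoid_undecidable_wordProblem :
    ∃ (n : ℕ) (w : FreeMonoid (Fin n × Bool)),
      ¬ ComputablePred
        (fun p : FreeMonoid (Fin n × Bool) × FreeMonoid (Fin n × Bool) =>
          oneRelatorInvCon w p.1 p.2) := by
  obtain ⟨f, hf, hdom⟩ := exists_primrec_dom_iff_exists_eq_zero
  obtain ⟨V, E, _, _, A, i, j, hA⟩ := exists_connects_iff_exists_eq_zero hf
  let ι := Fintype.equivFin (Generator ⊕ SimVertex V E)
  let u (c : Nat.Partrec.Code) :=
    edgeWord ι (.state i) (wInv wordA ^ 2 ^ Encodable.encode c) .sink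
  refine ⟨_, relator ι (simGraph A j) commutatorWord, fun hcomp => ?_⟩
  have hu : Primrec fun c => u c * wInv (u c) :=
    (primrec_edgeWord_pow_mul_wInv ι _ _ _).comp ((primrec_pow Primrec.nat_mul 2).comp .encode)
  refine ComputablePred.halting_problem 0
    (ComputablePred.computable_of_manyOneReducible
      ⟨_, (hu.pair (.const 1)).to_comp, fun c => ?_⟩ hcomp)
  calc (c.eval 0).Dom ↔ A.Connects AffineLabel.Rel i j (2 ^ Encodable.encode c) 0 := by
        rw [hdom, hA]
    _ ↔ RightInvertible (oneRelatorInvCon _).mk' (u c) :=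
        (rightInvertible_edgeWord_iff_connects A i j ι _).symm
    _ ↔ _ := Con.eq _
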